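/- Let q = p^r be a power of a prime p and let F_{q^3} denote the finite field with q^3 elements. The number of triples (u, v, w) ∈ F_{q^3}^3 with (u, v, w) ≠ (0, 0, 0) and u^{q-1} + v^{q-1} + w^{q-1} = 0 equals (q^3 - 1)·N, where N = (2q+2)(q-1)^2 if q ≡ 5 (mod 6); N = (2q+1)(q-1)^2 if q ≡ 0 (mod 3); N = 2q(q-1)^2 if q ≡ 1 (mod 6); N = (2q+2)(q-1)^2 + 3(q-1) if q ≡ 2 (mod 6); and N = 2q(q-1)^2 + 3(q-1) if q ≡ 4 (mod 6). -/

import Mathlib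

open Polynomial in
theorem fcc_card_roots {F : Type*} [Field F] [Fintype F] [DecidableEq F] (P : F[X])
    (h : P ∣ X ^ Fintype.card F - X) :
    (Finset.univ.filter (fun x : F => P.eval x = 0)).card = P.natDegree := by
  obtain ⟨Q, hQ⟩ := h
  have h1 : 1 < Fintype.card F := Fintype.one_lt_card
  have hne : (X ^ Fintype.card F - X : F[X]) ≠ 0 := FiniteField.X_pow_card_sub_X_ne_zero F h1
  have hPQ : P * Q ≠ 0 := hQ ▸ hne
  have hP : P ≠ 0 := left_ne_zero_of_mul hPQ
  have hQ0 : Q ≠ 0 := right_ne_zero_of_mul hPQ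
  have hdeg : P.natDegree + Q.natDegree = Fintype.card F := by
    rw [← natDegree_mul hP hQ0, ← hQ, FiniteField.X_pow_card_sub_X_natDegree_eq F h1]
  have hroots : P.roots + Q.roots = (Finset.univ : Finset F).val := by
    rw [← roots_mul hPQ, ← hQ, FiniteField.roots_X_pow_card_sub_X]
  have hcard : Multiset.card P.roots + Multiset.card Q.roots = Fintype.card F := by
    rw [← Multiset.card_add, hroots]; rfl
  have a1 := P.card_roots'
  have a2 := Q.card_roots'
  have hnd : P.roots.Nodup :=
    Multiset.nodup_of_le (hroots ▸ Multiset.le_add_right _ _) Finset.univ.nodup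
  have : Finset.univ.filter (fun x : F => P.eval x = 0) = P.roots.toFinset := by
    ext x; simp [hP]
  rw [this, Multiset.toFinset_card_of_nodup hnd]
  omega

open Polynomial in
theorem fcc_A1 {p r q : ℕ} (hp : p.Prime) (hq : q = p ^ r)
    {F : Type*} [Field F] [Fintype F] [DecidableEq F] [CharP F p] (hF : Fintype.card F = q ^ 3) :
    (Finset.univ.filter (fun x : F => x ^ q * x + x ^ q + 1 = 0)).card = q + 1 := by
  have : Fact p.Prime := ⟨hp⟩
  have hq0 : 0 < q := hq ▸ pow_pos hp.pos r
  have hfr : ∀ a b : F[X], (a + b) ^ q = a ^ q + b ^ q := by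
    intro a b; rw [hq]; exact add_pow_char_pow a b p r
  have h := fcc_card_roots (X ^ q * X + X ^ q + 1 : F[X]) ?_
  · simp only [eval_add, eval_mul, eval_pow, eval_X, eval_one] at h
    rw [h, ← pow_succ]
    compute_degree!
  · rw [hF]
    have e2 : (X ^ q * X + X ^ q + 1 : F[X]) ^ q
        = X ^ (q ^ 2) * X ^ q + X ^ (q ^ 2) + 1 := by
      rw [hfr, hfr, mul_pow, one_pow, ← pow_mul, sq]
    have e3 : (X ^ (q ^ 2) * X ^ q + X ^ (q ^ 2) + 1 : F[X]) ^ q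
        = X ^ (q ^ 3) * X ^ (q ^ 2) + X ^ (q ^ 3) + 1 := by
      rw [hfr, hfr, mul_pow, one_pow, ← pow_mul, ← pow_mul, ← pow_succ, ← sq]
    have d1 : (X ^ q * X + X ^ q + 1 : F[X]) ∣ X ^ q * X + X ^ q + 1 := dvd_rfl
    have d2 : (X ^ q * X + X ^ q + 1 : F[X]) ∣ X ^ (q ^ 2) * X ^ q + X ^ (q ^ 2) + 1 := by
      rw [← e2]; exact dvd_pow_self _ hq0.ne'
    have d3 : (X ^ q * X + X ^ q + 1 : F[X]) ∣ X ^ (q ^ 3) * X ^ (q ^ 2) + X ^ (q ^ 3) + 1 := by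
      rw [← e3]; exact d2.trans (dvd_pow_self _ hq0.ne')
    generalize (X ^ (q ^ 3) : F[X]) = c at *
    generalize (X ^ (q ^ 2) : F[X]) = b at *
    generalize (X ^ q : F[X]) = a at *
    obtain ⟨k2, h2⟩ := d2
    obtain ⟨k3, h3⟩ := d3
    clear d1 e2 e3
    refine ⟨(c - X) + (X + 1) * (a * X * k3 - c * b + c * k2 - c), ?_⟩
    linear_combination (X + 1) * (a * X * h3 + c * h2)

theorem fcc_A2 {p r q : ℕ} (hp : p.Prime) (hq : q = p ^ r)
    {F : Type*} [Field F] [Fintype F] [DecidableEq F] [CharP F p] (hF : Fintype.card F = q ^ 3) :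
    (Finset.univ.filter (fun x : F => x ^ q * x + x + 1 = 0)).card = q + 1 := by
  have hq0 : q ≠ 0 := (hq ▸ pow_pos hp.pos r : 0 < q).ne'
  rw [← fcc_A1 hp hq hF]
  refine Finset.card_bij' (fun x _ => x⁻¹) (fun x _ => x⁻¹) ?_ ?_ ?_ ?_
  · intro x hx
    simp only [Finset.mem_filter, Finset.mem_univ, true_and] at hx ⊢
    have hx0 : x ≠ 0 := by rintro rfl; simp [hq0] at hx
    have : x ^ q ≠ 0 := pow_ne_zero _ hx0
    rw [inv_pow]; field_simp; linear_combination hx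
  · intro x hx
    simp only [Finset.mem_filter, Finset.mem_univ, true_and] at hx ⊢
    have hx0 : x ≠ 0 := by rintro rfl; simp [hq0] at hx
    have : x ^ q ≠ 0 := pow_ne_zero _ hx0
    rw [inv_pow]; field_simp; linear_combination hx
  · simp
  · simp

theorem fcc_K {q : ℕ} (hq : 2 ≤ q)
    {F : Type*} [Field F] [Fintype F] [DecidableEq F] (hF : Fintype.card F = q ^ 3) (y : F) :
    (Finset.univ.filter (fun x : F => x ^ (q - 1) = y)).card =
      if y = 0 then 1 else if y ^ (q ^ 2 + q + 1) = 1 then q - 1 else 0 := by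
  have hm : (q - 1) * (q ^ 2 + q + 1) + 1 = q ^ 3 := by
    obtain ⟨k, rfl⟩ : ∃ k, q = k + 1 := ⟨q - 1, by omega⟩
    simp only [Nat.add_sub_cancel]; ring
  have hn : q - 1 ≠ 0 := by omega
  split_ifs with h0 h1
  · subst h0
    rw [Finset.card_eq_one]
    exact ⟨0, by ext x; simp [hn]⟩
  · have h := fcc_card_roots (Polynomial.X ^ (q - 1) - Polynomial.C y : Polynomial F) ?_
    · rw [Polynomial.natDegree_X_pow_sub_C] at h
      simpa [sub_eq_zero] using h
    · have := sub_dvd_pow_sub_pow (Polynomial.X ^ (q - 1) : Polynomial F) (Polynomial.C y)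
        (q ^ 2 + q + 1)
      rw [← pow_mul, ← Polynomial.C_pow, h1, Polynomial.C_1] at this
      refine this.trans ⟨Polynomial.X, ?_⟩
      rw [hF, ← hm, pow_succ]; ring
  · rw [Finset.card_eq_zero, Finset.filter_eq_empty_iff]
    rintro x - rfl
    have hx : x ≠ 0 := by rintro rfl; simp [hn] at h0
    apply h1
    rw [← pow_mul]
    have := FiniteField.pow_card_sub_one_eq_one x hx
    rwa [hF, ← hm, Nat.add_sub_cancel] at this

theorem fcc_M {p r q : ℕ} (hp : p.Prime) (hq : q = p ^ r)
    {F : Type*} [Field F] [Fintype F] [DecidableEq F] [CharP F p] (hF : Fintype.card F = q ^ 3) :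
    (Finset.univ.filter (fun x : F => x ^ (q ^ 2 + q + 1) = 1 ∧
        (-1 - x) ^ (q ^ 2 + q + 1) = 1)).card +
      (Finset.univ.filter (fun x : F => x ^ q = x ∧ x ^ 2 + x + 1 = 0)).card = 2 * (q + 1) := by
  have : Fact p.Prime := ⟨hp⟩
  have hq0 : q ≠ 0 := (hq ▸ pow_pos hp.pos r : 0 < q).ne'
  have hfr : ∀ a b : F, (a + b) ^ q = a ^ q + b ^ q := by
    intro a b; rw [hq]; exact add_pow_char_pow a b p r
  have hfs : ∀ a b : F, (a - b) ^ q = a ^ q - b ^ q := by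
    intro a b; rw [hq]; exact sub_pow_char_pow a b r
  have hn1 : (-1 : F) ^ q = -1 := by
    have := hfs 0 1
    simpa [hq0] using this
  have h3 : ∀ x : F, x ^ (q ^ 2 + q + 1) = x * x ^ q * (x ^ q) ^ q := by
    intro x; rw [← pow_mul, ← sq]; ring
  have hf3 : ∀ x : F, ((x ^ q) ^ q) ^ q = x := by
    intro x
    have h := FiniteField.pow_card x
    rw [hF] at h
    rw [← pow_mul, ← pow_mul]
    convert h using 2
    ring
  have hU : Finset.univ.filter (fun x : F => x ^ (q ^ 2 + q + 1) = 1 ∧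
        (-1 - x) ^ (q ^ 2 + q + 1) = 1) =
      Finset.univ.filter (fun x : F => x ^ q * x + x ^ q + 1 = 0) ∪
      Finset.univ.filter (fun x : F => x ^ q * x + x + 1 = 0) := by
    ext x
    simp only [Finset.mem_filter, Finset.mem_univ, true_and, Finset.mem_union]
    rw [h3, h3]
    simp only [hfs, hn1]
    have hf := hf3 x
    have k1 : x ^ q * x + x ^ q + 1 = 0 →
        (x ^ q) ^ q * x ^ q + (x ^ q) ^ q + 1 = 0 ∧ x * (x ^ q) ^ q + x + 1 = 0 := by
      intro h
      have a1 := congrArg (· ^ q) h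
      simp only [hfr, mul_pow, one_pow, zero_pow hq0] at a1
      have a2 := congrArg (· ^ q) a1
      simp only [hfr, mul_pow, one_pow, zero_pow hq0, hf] at a2
      exact ⟨a1, a2⟩
    have k2 : x ^ q * x + x + 1 = 0 →
        (x ^ q) ^ q * x ^ q + x ^ q + 1 = 0 ∧ x * (x ^ q) ^ q + (x ^ q) ^ q + 1 = 0 := by
      intro h
      have a1 := congrArg (· ^ q) h
      simp only [hfr, mul_pow, one_pow, zero_pow hq0] at a1
      have a2 := congrArg (· ^ q) a1
      simp only [hfr, mul_pow, one_pow, zero_pow hq0, hf] at a2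
      exact ⟨a1, a2⟩
    clear hf
    generalize (x ^ q) ^ q = z at *
    generalize x ^ q = y at *
    constructor
    · rintro ⟨E1, E2⟩
      rw [← mul_eq_zero]
      linear_combination (-x * y) * E2 - (1 + x + y + x * y) * E1
    · rintro (h | h)
      · obtain ⟨a1, a2⟩ := k1 h
        have E1 : x * y * z = 1 := by linear_combination z * h - a1
        exact ⟨E1, by linear_combination -(h + a1 + a2 + E1)⟩
      · obtain ⟨a1, a2⟩ := k2 h
        have E1 : x * y * z = 1 := by linear_combination x * a1 - h
        exact ⟨E1, by linear_combination -(h + a1 + a2 + E1)⟩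
  have hI : Finset.univ.filter (fun x : F => x ^ q = x ∧ x ^ 2 + x + 1 = 0) =
      Finset.univ.filter (fun x : F => x ^ q * x + x ^ q + 1 = 0) ∩
      Finset.univ.filter (fun x : F => x ^ q * x + x + 1 = 0) := by
    ext x
    simp only [Finset.mem_filter, Finset.mem_univ, true_and, Finset.mem_inter]
    constructor
    · rintro ⟨a, b⟩
      rw [a]
      exact ⟨by linear_combination b, by linear_combination b⟩
    · rintro ⟨a, b⟩
      have h : x ^ q = x := by linear_combination a - b
      rw [h] at a
      exact ⟨h, by linear_combination a⟩
  rw [hU, hI, Finset.card_union_add_card_inter, fcc_A1 hp hq hF, fcc_A2 hp hq hF, two_mul]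

theorem fcc_W {p r q : ℕ} (hp : p.Prime) (hr : 0 < r) (hq : q = p ^ r)
    {F : Type*} [Field F] [Fintype F] [DecidableEq F] [CharP F p] (hF : Fintype.card F = q ^ 3) :
    (Finset.univ.filter (fun x : F => x ^ q = x ∧ x ^ 2 + x + 1 = 0)).card =
      if q % 3 = 0 then 1 else if q % 3 = 1 then 2 else 0 := by
  have : Fact p.Prime := ⟨hp⟩
  have h3 : (3 : F) = 0 ↔ q % 3 = 0 := by
    have := CharP.cast_eq_zero_iff F p 3
    push_cast at this
    rw [this, Nat.prime_dvd_prime_iff_eq hp Nat.prime_three, ← Nat.dvd_iff_mod_eq_zero, hq]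
    constructor
    · rintro rfl; exact dvd_pow_self _ hr.ne'
    · intro h
      exact ((Nat.prime_dvd_prime_iff_eq Nat.prime_three hp).1
        (Nat.prime_three.dvd_of_dvd_pow h)).symm
  have hcube : ∀ x : F, x ^ 2 + x + 1 = 0 → x ^ 3 = 1 := by
    intro x hx; linear_combination (x - 1) * hx
  split_ifs with c0 c1
  · rw [Finset.card_eq_one]
    refine ⟨1, ?_⟩
    ext x
    simp only [Finset.mem_filter, Finset.mem_univ, true_and, Finset.mem_singleton]
    have h := h3.2 c0
    constructor
    · rintro ⟨-, b⟩
      have : (x - 1) ^ 2 = 0 := by linear_combination b - x * h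
      exact sub_eq_zero.1 (pow_eq_zero_iff two_ne_zero |>.1 this)
    · rintro rfl
      exact ⟨one_pow _, by linear_combination h⟩
  · have h : (3 : F) ≠ 0 := fun h => c0 (h3.1 h)
    have hdvd : 3 ∣ Nat.card Fˣ := by
      rw [Nat.card_units, Nat.card_eq_fintype_card, hF]
      have : q ^ 3 % 3 = 1 := by rw [Nat.pow_mod, c1]
      omega
    have : Fact (Nat.Prime 3) := ⟨Nat.prime_three⟩
    obtain ⟨g, hg⟩ := exists_prime_orderOf_dvd_card' (G := Fˣ) 3 hdvd
    have g3 : (g : F) ^ 3 = 1 := by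
      rw [← Units.val_pow_eq_pow_val, ← hg, pow_orderOf_eq_one]; rfl
    have g1 : (g : F) ≠ 1 := by
      intro h1
      have : g = 1 := Units.ext h1
      rw [this, orderOf_one] at hg
      omega
    have gg : (g : F) ^ 2 + g + 1 = 0 := by
      have : ((g : F) - 1) * ((g : F) ^ 2 + g + 1) = 0 := by linear_combination g3
      exact (mul_eq_zero.1 this).resolve_left (sub_ne_zero.2 g1)
    generalize (g : F) = w at *
    rw [Finset.card_eq_two]
    refine ⟨w, -1 - w, ?_, ?_⟩
    · intro e
      apply h
      linear_combination 4 * gg - (2 * w + 1) * e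
    · ext x
      simp only [Finset.mem_filter, Finset.mem_univ, true_and, Finset.mem_insert,
        Finset.mem_singleton]
      constructor
      · rintro ⟨-, b⟩
        have : (x - w) * (x - (-1 - w)) = 0 := by linear_combination b - gg
        rcases mul_eq_zero.1 this with h | h
        · exact Or.inl (sub_eq_zero.1 h)
        · exact Or.inr (sub_eq_zero.1 h)
      · intro hx
        have hx2 : x ^ 2 + x + 1 = 0 := by
          rcases hx with rfl | rfl
          · exact gg
          · linear_combination gg
        refine ⟨?_, hx2⟩
        rw [← Nat.div_add_mod q 3, c1, pow_succ, pow_mul, hcube x hx2, one_pow, one_mul]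
  · rw [Finset.card_eq_zero, Finset.filter_eq_empty_iff]
    rintro x - ⟨a, b⟩
    have c2 : q % 3 = 2 := by omega
    rw [← Nat.div_add_mod q 3, c2, pow_add, pow_mul, hcube x b, one_pow, one_mul] at a
    apply c0
    apply h3.1
    have e1 : 2 * x + 1 = 0 := by linear_combination b - a
    linear_combination 4 * b - (2 * x + 1) * e1

theorem fcc_B {q : ℕ} (hq : 2 ≤ q)
    {F : Type*} [Field F] [Fintype F] [DecidableEq F] (hF : Fintype.card F = q ^ 3) :
    (Finset.univ.filter (fun t : F × F => t.1 ^ (q - 1) + t.2 ^ (q - 1) + 1 = 0)).card =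
      (Finset.univ.filter (fun x : F => x ^ (q ^ 2 + q + 1) = 1 ∧
        (-1 - x) ^ (q ^ 2 + q + 1) = 1)).card * (q - 1) ^ 2 +
      2 * (Finset.univ.filter (fun x : F => x ^ (q - 1) = -1)).card := by
  rw [Finset.card_eq_sum_card_fiberwise (f := fun t : F × F => t.1 ^ (q - 1))
    (t := Finset.univ) (by intro x _; simp)]
  have h1 : ∀ x : F, (Finset.filter (fun t : F × F => t.1 ^ (q - 1) = x)
      (Finset.univ.filter (fun t : F × F => t.1 ^ (q - 1) + t.2 ^ (q - 1) + 1 = 0))).card =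
      (if x ^ (q ^ 2 + q + 1) = 1 ∧ (-1 - x) ^ (q ^ 2 + q + 1) = 1 then (q - 1) ^ 2 else 0) +
      (if x = 0 then (Finset.univ.filter (fun x : F => x ^ (q - 1) = -1)).card else 0) +
      (if x = -1 then (Finset.univ.filter (fun x : F => x ^ (q - 1) = -1)).card else 0) := by
    intro x
    have : Finset.filter (fun t : F × F => t.1 ^ (q - 1) = x)
      (Finset.univ.filter (fun t : F × F => t.1 ^ (q - 1) + t.2 ^ (q - 1) + 1 = 0)) =
      (Finset.univ.filter (fun a : F => a ^ (q - 1) = x)) ×ˢ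
      (Finset.univ.filter (fun a : F => a ^ (q - 1) = -1 - x)) := by
      ext ⟨a, b⟩
      simp only [Finset.mem_filter, Finset.mem_univ, true_and, Finset.mem_product]
      constructor
      · rintro ⟨h, rfl⟩
        exact ⟨rfl, by linear_combination h⟩
      · rintro ⟨rfl, h⟩
        exact ⟨by linear_combination h, rfl⟩
    rw [this, Finset.card_product, fcc_K hq hF, fcc_K hq hF, fcc_K hq hF]
    have hm : q ^ 2 + q + 1 ≠ 0 := by omega
    by_cases x0 : x = 0
    · subst x0
      simp
    by_cases x1 : x = -1
    · subst x1
      simp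
    have x2 : -1 - x ≠ 0 := by
      intro h; apply x1; linear_combination -h
    simp only [x0, x1, x2, if_false, add_zero]
    split_ifs <;> simp_all [sq]
  simp_rw [h1]
  rw [Finset.sum_add_distrib, Finset.sum_add_distrib, ← Finset.sum_filter, Finset.sum_const,
    smul_eq_mul]
  simp
  ring

theorem fcc_total {q : ℕ} (hq : 2 ≤ q)
    {F : Type*} [Field F] [Fintype F] [DecidableEq F] (hF : Fintype.card F = q ^ 3) :
    (Finset.univ.filter (fun t : F × F × F => t ≠ 0 ∧
      t.1 ^ (q - 1) + t.2.1 ^ (q - 1) + t.2.2 ^ (q - 1) = 0)).card = (q ^ 3 - 1) *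
      ((Finset.univ.filter (fun t : F × F => t.1 ^ (q - 1) + t.2 ^ (q - 1) + 1 = 0)).card +
      (Finset.univ.filter (fun x : F => x ^ (q - 1) = -1)).card) := by
  have hn : q - 1 ≠ 0 := by omega
  have hU : (Finset.univ.filter (fun x : F => x ≠ 0)).card = q ^ 3 - 1 := by
    rw [Finset.filter_ne' , Finset.card_erase_of_mem (Finset.mem_univ _), Finset.card_univ, hF]
  rw [mul_add, ← hU, ← Finset.card_product, ← Finset.card_product,
    ← Finset.card_filter_add_card_filter_not (fun t : F × F × F => t.2.2 ≠ 0)]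
  congr 1
  · refine Finset.card_bij' (fun t _ => (t.2.2, (t.1 / t.2.2, t.2.1 / t.2.2)))
      (fun s _ => (s.2.1 * s.1, s.2.2 * s.1, s.1)) ?_ ?_ ?_ ?_
    · rintro ⟨u, v, w⟩ h
      simp only [Finset.mem_filter, Finset.mem_univ, true_and, Finset.mem_product] at h ⊢
      obtain ⟨⟨-, h⟩, hw⟩ := h
      have : w ^ (q - 1) ≠ 0 := pow_ne_zero _ hw
      refine ⟨hw, ?_⟩
      rw [div_pow, div_pow]
      field_simp
      linear_combination h
    · rintro ⟨w, a, b⟩ h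
      simp only [Finset.mem_filter, Finset.mem_univ, true_and, Finset.mem_product] at h ⊢
      obtain ⟨hw, h⟩ := h
      refine ⟨⟨?_, ?_⟩, hw⟩
      · intro e
        simp only [Prod.mk_eq_zero] at e
        exact hw e.2.2
      · rw [mul_pow, mul_pow]
        linear_combination w ^ (q - 1) * h
    · rintro ⟨u, v, w⟩ h
      simp only [Finset.mem_filter, Finset.mem_univ, true_and] at h
      simp [h.2]
    · rintro ⟨w, a, b⟩ h
      simp only [Finset.mem_filter, Finset.mem_univ, true_and, Finset.mem_product] at h
      simp [h.1]
  · refine Finset.card_bij' (fun t _ => (t.2.1, t.1 / t.2.1))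
      (fun s _ => (s.2 * s.1, s.1, 0)) ?_ ?_ ?_ ?_
    · rintro ⟨u, v, w⟩ h
      simp only [Finset.mem_filter, Finset.mem_univ, true_and, Finset.mem_product, not_not] at h ⊢
      obtain ⟨⟨h0, h⟩, rfl⟩ := h
      rw [zero_pow hn, add_zero] at h
      have hv : v ≠ 0 := by
        rintro rfl
        rw [zero_pow hn, add_zero] at h
        exact h0 (by simp [(pow_eq_zero_iff hn).1 h])
      have : v ^ (q - 1) ≠ 0 := pow_ne_zero _ hv
      refine ⟨hv, ?_⟩
      rw [div_pow]
      field_simp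
      linear_combination h
    · rintro ⟨v, a⟩ h
      simp only [Finset.mem_filter, Finset.mem_univ, true_and, Finset.mem_product, not_not] at h ⊢
      obtain ⟨hw, h⟩ := h
      refine ⟨⟨?_, ?_⟩, trivial⟩
      · intro e
        simp only [Prod.mk_eq_zero] at e
        exact hw e.2.1
      · rw [mul_pow, h, zero_pow hn]; ring
    · rintro ⟨u, v, w⟩ h
      simp only [Finset.mem_filter, Finset.mem_univ, true_and, not_not] at h
      obtain ⟨⟨h0, h⟩, rfl⟩ := h
      rw [zero_pow hn, add_zero] at h
      have hv : v ≠ 0 := by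
        rintro rfl
        rw [zero_pow hn, add_zero] at h
        exact h0 (by simp [(pow_eq_zero_iff hn).1 h])
      simp [hv]
    · rintro ⟨w, a⟩ h
      simp only [Finset.mem_filter, Finset.mem_univ, true_and, Finset.mem_product] at h
      simp [h.1]

theorem fcc_neg {p r q : ℕ} (hp : p.Prime) (hr : 0 < r) (hq : q = p ^ r) (hq2 : 2 ≤ q)
    {F : Type*} [Field F] [Fintype F] [DecidableEq F] [CharP F p] (hF : Fintype.card F = q ^ 3) :
    (Finset.univ.filter (fun x : F => x ^ (q - 1) = -1)).card =
      if q % 2 = 0 then q - 1 else 0 := by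
  rw [fcc_K hq2 hF, if_neg (neg_ne_zero.2 one_ne_zero)]
  have ho : Odd (q ^ 2 + q + 1) := by
    have := Nat.even_mul_succ_self q
    rw [show q ^ 2 + q + 1 = q * (q + 1) + 1 by ring]
    exact this.add_one
  rw [ho.neg_one_pow]
  congr 1
  rw [eq_iff_iff]
  have h := CharP.cast_eq_zero_iff F p 2
  push_cast at h
  have h1 : (-1 : F) = 1 ↔ (2 : F) = 0 :=
    ⟨fun h => by linear_combination -h, fun h => by linear_combination -h⟩
  rw [h1, h, Nat.prime_dvd_prime_iff_eq hp Nat.prime_two, ← Nat.dvd_iff_mod_eq_zero, hq]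
  constructor
  · rintro rfl; exact dvd_pow_self _ hr.ne'
  · intro h
    exact ((Nat.prime_dvd_prime_iff_eq Nat.prime_two hp).1
      (Nat.prime_two.dvd_of_dvd_pow h)).symm

theorem fermat_curve_Fq3_count {p r : ℕ} (hp : p.Prime) (hr : 0 < r) {q : ℕ} (hq : q = p ^ r)
    {F : Type*} [Field F] [Fintype F] (hF : Fintype.card F = q ^ 3) :
    Nat.card {t : F × F × F //
        t ≠ 0 ∧ t.1 ^ (q - 1) + t.2.1 ^ (q - 1) + t.2.2 ^ (q - 1) = 0} =
      (q ^ 3 - 1) *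
        (if q % 6 = 5 then (2 * q + 2) * (q - 1) ^ 2
         else if q % 3 = 0 then (2 * q + 1) * (q - 1) ^ 2
         else if q % 6 = 1 then 2 * q * (q - 1) ^ 2
         else if q % 6 = 2 then (2 * q + 2) * (q - 1) ^ 2 + 3 * (q - 1)
         else 2 * q * (q - 1) ^ 2 + 3 * (q - 1)) := by
  classical
  have : Fact p.Prime := ⟨hp⟩
  have hq2 : 2 ≤ q := by
    rw [hq]; exact hp.two_le.trans (Nat.le_self_pow hr.ne' p)
  have hchar : CharP F p := by
    apply charP_of_card_eq_prime_pow (f := r * 3)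
    rw [hF, hq, pow_mul]
  rw [Nat.card_eq_fintype_card, Fintype.card_subtype, fcc_total hq2 hF, fcc_B hq2 hF,
    fcc_neg hp hr hq hq2 hF]
  have hM := fcc_M hp hq hF
  rw [fcc_W hp hr hq hF] at hM
  congr 1
  generalize (Finset.univ.filter (fun x : F => x ^ (q ^ 2 + q + 1) = 1 ∧
        (-1 - x) ^ (q ^ 2 + q + 1) = 1)).card = M at *
  have hpow : q % 6 = 0 → False := by
    intro h
    have e2 : 2 ∣ p := Nat.prime_two.dvd_of_dvd_pow (n := r) (hq ▸ (by omega))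
    have e3 : 3 ∣ p := Nat.prime_three.dvd_of_dvd_pow (n := r) (hq ▸ (by omega))
    have := (Nat.prime_dvd_prime_iff_eq Nat.prime_two hp).1 e2
    omega
  have hlt : q % 6 < 6 := Nat.mod_lt _ (by norm_num)
  have m2 : q % 2 = q % 6 % 2 := by omega
  have m3 : q % 3 = q % 6 % 3 := by omega
  rw [m2, m3]
  rw [m3] at hM
  generalize q % 6 = s at *
  interval_cases s
  · exact (hpow rfl).elim
  all_goals simp at hM ⊢
  · obtain rfl : M = 2 * q := by omega
    simp
  · obtain rfl : M = 2 * q + 2 := by omega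
    ring
  · obtain rfl : M = 2 * q + 1 := by omega
    simp
  · obtain rfl : M = 2 * q := by omega
    ring
  · obtain rfl : M = 2 * q + 2 := by omega
    simp
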